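/- arXiv:1905.06101 — 2 statements merged into one kernel-verified Lean document; each statement's English description precedes it below -/
import Mathlib

section
/- Let d ≥ 4 and let p_1 ≥ … ≥ p_d ≥ 0 be real numbers. Then for all indices 1 ≤ i < j < l−1 < d, p_{i,l} − p_{i,l−1} ≥ p_{j,l} − p_{j,l−1}. (Lemma 1(iii) of the Supplemental Material.) -/
/-- The coefficients `p_{i,j}`: `0` if `p i = p j = 0`, else `(p i - p j)² / (p i + p j)`. -/
noncomputable def pij {d : ℕ} (p : Fin d → ℝ) (i j : Fin d) : ℝ :=
  if p i = 0 ∧ p j = 0 then 0 else (p i - p j) ^ 2 / (p i + p j)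

/-!
Since `(a - x)² = (a + x)² - 4 a x`, the function `(a - x)² / (a + x)` equals `a + x` minus
four times `a x / (a + x)`. Replacing `x` by a smaller `y` decreases `a x / (a + x)` by
`(x - y) · a / (a + x) · a / (a + y)`, and both quotients are increasing in `a`. Hence
`(a - x)² / (a + x)` is submodular on the nonnegative quadrant.
-/

section OrderedField

variable {K : Type*} [Field K]

theorem sq_sub_div_add_eq_add_sub (a x : K) :
    (a - x) ^ 2 / (a + x) = a + x - 4 * (a * x / (a + x)) := by
  calc (a - x) ^ 2 / (a + x) = ((a + x) * (a + x) - 4 * (a * x)) / (a + x) := by ring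
    _ = a + x - 4 * (a * x / (a + x)) := by
      rw [sub_div, mul_self_div_self, mul_div_assoc]

variable [LinearOrder K] [IsStrictOrderedRing K] {a b x y : K}

theorem mul_div_add_sub_mul_div_add (ha : 0 ≤ a) (hx : 0 ≤ x) (hy : 0 ≤ y) :
    a * x / (a + x) - a * y / (a + y) = (x - y) * (a / (a + x) * (a / (a + y))) := by
  rcases ha.eq_or_lt with rfl | ha
  · simp
  · have hax : a + x ≠ 0 := by positivity
    have hay : a + y ≠ 0 := by positivity
    field_simp
    ring

theorem div_self_add_le_div_self_add (hb : 0 ≤ b) (hba : b ≤ a) (hx : 0 ≤ x) :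
    b / (b + x) ≤ a / (a + x) := by
  rcases hb.eq_or_lt with rfl | hb
  · rw [zero_div]
    positivity
  · have ha : 0 < a := hb.trans_le hba
    rw [div_le_div_iff₀ (by positivity) (by positivity), mul_add, mul_add, mul_comm b a]
    gcongr

theorem mul_div_add_sub_mul_div_add_le (hb : 0 ≤ b) (hba : b ≤ a) (hy : 0 ≤ y) (hyx : y ≤ x) :
    b * x / (b + x) - b * y / (b + y) ≤ a * x / (a + x) - a * y / (a + y) := by
  have ha : 0 ≤ a := hb.trans hba
  have hx : 0 ≤ x := hy.trans hyx
  rw [mul_div_add_sub_mul_div_add hb hx hy, mul_div_add_sub_mul_div_add ha hx hy]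
  exact mul_le_mul_of_nonneg_left
    (mul_le_mul (div_self_add_le_div_self_add hb hba hx) (div_self_add_le_div_self_add hb hba hy)
      (by positivity) (by positivity))
    (sub_nonneg.2 hyx)

theorem sq_sub_div_add_sub_le (hb : 0 ≤ b) (hba : b ≤ a) (hy : 0 ≤ y) (hyx : y ≤ x) :
    (b - y) ^ 2 / (b + y) - (b - x) ^ 2 / (b + x) ≤
      (a - y) ^ 2 / (a + y) - (a - x) ^ 2 / (a + x) := by
  simp only [sq_sub_div_add_eq_add_sub]
  linarith [mul_div_add_sub_mul_div_add_le hb hba hy hyx]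

end OrderedField

-- The case `p i = p j = 0` agrees with the convention `0 / 0 = 0`.
theorem pij_eq_sq_sub_div_add {d : ℕ} (p : Fin d → ℝ) (i j : Fin d) :
    pij p i j = (p i - p j) ^ 2 / (p i + p j) := by
  rw [pij, ite_eq_right_iff]
  rintro ⟨hi, hj⟩
  simp [hi, hj]

theorem pij_column_difference_general {d : ℕ} {p : Fin d → ℝ} {i j m l : Fin d}
    (hj : 0 ≤ p j) (hji : p j ≤ p i) (hl : 0 ≤ p l) (hlm : p l ≤ p m) :
    pij p j l - pij p j m ≤ pij p i l - pij p i m := by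
  simp only [pij_eq_sq_sub_div_add]
  exact sq_sub_div_add_sub_le hj hji hl hlm

/-- Lemma 1(iii): for `p_1 ≥ … ≥ p_d ≥ 0` and indices `i < j < l-1` (with `m = l-1`),
`p_{i,l} − p_{i,l-1} ≥ p_{j,l} − p_{j,l-1}`. -/
theorem pij_column_difference {d : ℕ} (hd : 4 ≤ d)
    (p : Fin d → ℝ) (hp : Antitone p) (hp0 : ∀ i, 0 ≤ p i)
    (i j m l : Fin d) (hij : i < j) (hjm : j < m) (hml : l.val = m.val + 1) :
    pij p j l - pij p j m ≤ pij p i l - pij p i m := by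
  have hml' : m ≤ l := Fin.le_def.2 (by omega)
  exact pij_column_difference_general (hp0 j) (hp hij.le) (hp0 l) (hp hml')
end

section
/- Let d ≥ 1, let p_1 ≥ … ≥ p_d ≥ 0 be real numbers, let n ≥ 1, let A_1, …, A_n be d×d complex Hermitian matrices, and let C = A_1 + … + A_n. Denote by a^{(l)}_1 ≥ … ≥ a^{(l)}_d the eigenvalues of A_l and c_1 ≥ … ≥ c_d the eigenvalues of C, each in decreasing order. Then ∑_{i=1}^d p_{i,d−i+1} (c_i − c_{d−i+1})² ≤ ∑_{i=1}^d p_{i,d−i+1} (∑_{l=1}^n (a^{(l)}_i − a^{(l)}_{d−i+1}))². (Finite-sum form of the upper bound K_α of Theorem 2, obtained by repeated application of the two-matrix lemma.) -/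
/-!
Put `s i = p_{i,d-i+1} (c i - c (d-i+1))`. The weights decrease towards the middle of the index
range, so `s` is decreasing, and it is odd under `i ↦ d-i+1`. The diagonal of each `A l` in an
eigenbasis of `C` is the image of the eigenvalues `a l` under a doubly stochastic matrix; by
Birkhoff's theorem and the rearrangement inequality, `∑ s i * c i ≤ ∑ s i * ∑ l, a l i`. Since `s`
is odd, this bounds the weighted square norm of the gaps of `c` by their weighted inner product
with the summed gaps of the `a l`, and Cauchy–Schwarz concludes.
-/

open scoped InnerProductSpace Matrix

section OddWeights

variable {R : Type*} {d : ℕ}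

lemma sum_mul_sub_rev [CommRing R] {s : Fin d → R} (hs : ∀ i, s i.rev = -s i) (f : Fin d → R) :
    ∑ i, s i * (f i - f i.rev) = 2 * (s ⬝ᵥ f) := by
  have reflect : ∑ i, s i * f i.rev = -∑ i, s i * f i := by
    rw [← Equiv.sum_comp Fin.revPerm, ← Finset.sum_neg_distrib]
    exact Finset.sum_congr rfl fun i _ ↦ by simp [hs]
  simp only [mul_sub, Finset.sum_sub_distrib, reflect, dotProduct]
  ring

lemma antitone_of_rev_eq_neg [AddCommGroup R] [LinearOrder R] [IsOrderedAddMonoid R]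
    {s : Fin d → R} (hs : ∀ i, s i.rev = -s i) (hs_nonneg : ∀ i, i ≤ i.rev → 0 ≤ s i)
    (hs_anti : AntitoneOn s {i | i ≤ i.rev}) : Antitone s := by
  have nonpos_of_rev_le {i : Fin d} (hi : i.rev ≤ i) : s i ≤ 0 := by
    simpa [hs] using hs_nonneg i.rev (by simpa using hi)
  intro i j hij
  rcases le_total j j.rev with hj | hj
  · exact hs_anti (hij.trans (hj.trans (Fin.rev_le_rev.2 hij))) hj hij
  · rcases le_total i i.rev with hi | hi
    · exact (nonpos_of_rev_le hj).trans (hs_nonneg i hi)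
    · simpa [hs] using hs_anti (a := j.rev) (b := i.rev) (by simpa using hj) (by simpa using hi)
        (Fin.rev_le_rev.2 hij)

lemma antitone_mul_sub_rev [CommRing R] [LinearOrder R] [IsStrictOrderedRing R]
    {q c : Fin d → R} (hq_nonneg : ∀ i, 0 ≤ q i) (hq_rev : ∀ i, q i.rev = q i)
    (hq_anti : AntitoneOn q {i | i ≤ i.rev}) (hc : Antitone c) :
    Antitone fun i ↦ q i * (c i - c i.rev) := by
  have gap_nonneg (i : Fin d) (hi : i ≤ i.rev) : 0 ≤ c i - c i.rev := sub_nonneg.2 (hc hi)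
  refine antitone_of_rev_eq_neg (fun i ↦ ?_)
    (fun i hi ↦ mul_nonneg (hq_nonneg i) (gap_nonneg i hi)) fun i hi j hj hij ↦ ?_
  · rw [hq_rev, Fin.rev_rev]
    ring
  · exact mul_le_mul (hq_anti hi hj hij) (sub_le_sub (hc hij) (hc (Fin.rev_le_rev.2 hij)))
      (gap_nonneg j hj) (hq_nonneg i)

end OddWeights

section Majorization

variable {R : Type*}

lemma sum_mul_sq_le_of_le_sum_mul_mul [CommRing R] [LinearOrder R] [IsStrictOrderedRing R]
    {κ : Type*} {t : Finset κ} {q x y : κ → R} (hq : ∀ i ∈ t, 0 ≤ q i)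
    (h : ∑ i ∈ t, q i * x i ^ 2 ≤ ∑ i ∈ t, q i * (x i * y i)) :
    ∑ i ∈ t, q i * x i ^ 2 ≤ ∑ i ∈ t, q i * y i ^ 2 := by
  have sum_sq_nonneg : 0 ≤ ∑ i ∈ t, q i * (x i - y i) ^ 2 :=
    Finset.sum_nonneg fun i hi ↦ mul_nonneg (hq i hi) (sq_nonneg _)
  have expand : ∑ i ∈ t, q i * (x i - y i) ^ 2 =
      ∑ i ∈ t, q i * x i ^ 2 - 2 * ∑ i ∈ t, q i * (x i * y i) + ∑ i ∈ t, q i * y i ^ 2 := by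
    rw [Finset.mul_sum, ← Finset.sum_sub_distrib, ← Finset.sum_add_distrib]
    exact Finset.sum_congr rfl fun i _ ↦ by ring
  linarith

/-- For antitone `b`, `hcb` is majorization of `c` by `b`, in its dual form. -/
lemma sum_mul_sub_rev_sq_le [CommRing R] [LinearOrder R] [IsStrictOrderedRing R] {d : ℕ}
    {q b c : Fin d → R} (hq_nonneg : ∀ i, 0 ≤ q i) (hq_rev : ∀ i, q i.rev = q i)
    (hq_anti : AntitoneOn q {i | i ≤ i.rev}) (hc : Antitone c)
    (hcb : ∀ s : Fin d → R, Antitone s → s ⬝ᵥ c ≤ s ⬝ᵥ b) :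
    ∑ i, q i * (c i - c i.rev) ^ 2 ≤ ∑ i, q i * (b i - b i.rev) ^ 2 := by
  let s : Fin d → R := fun i ↦ q i * (c i - c i.rev)
  have s_rev (i : Fin d) : s i.rev = -s i := by
    simp only [s, hq_rev, Fin.rev_rev]
    ring
  have s_anti : Antitone s := antitone_mul_sub_rev hq_nonneg hq_rev hq_anti hc
  refine sum_mul_sq_le_of_le_sum_mul_mul (fun i _ ↦ hq_nonneg i) ?_
  calc ∑ i, q i * (c i - c i.rev) ^ 2
      = ∑ i, s i * (c i - c i.rev) := Finset.sum_congr rfl fun i _ ↦ by ring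
    _ = 2 * (s ⬝ᵥ c) := sum_mul_sub_rev s_rev c
    _ ≤ 2 * (s ⬝ᵥ b) := by gcongr; exact hcb s s_anti
    _ = ∑ i, s i * (b i - b i.rev) := (sum_mul_sub_rev s_rev b).symm
    _ = ∑ i, q i * ((c i - c i.rev) * (b i - b i.rev)) :=
        Finset.sum_congr rfl fun i _ ↦ mul_assoc _ _ _

lemma dotProduct_mulVec_le_of_mem_doublyStochastic [Field R] [LinearOrder R]
    [IsStrictOrderedRing R] {κ : Type*} [Fintype κ] [DecidableEq κ] {M : Matrix κ κ R}
    (hM : M ∈ doublyStochastic R κ) {s a : κ → R} (hsa : Monovary s a) :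
    s ⬝ᵥ M *ᵥ a ≤ s ⬝ᵥ a := by
  have convex_le : Convex R {N : Matrix κ κ R | s ⬝ᵥ N *ᵥ a ≤ s ⬝ᵥ a} :=
    convex_halfSpace_le ⟨fun N N' ↦ by rw [Matrix.add_mulVec, dotProduct_add],
      fun r N ↦ by rw [Matrix.smul_mulVec, dotProduct_smul]⟩ _
  rw [← SetLike.mem_coe, doublyStochastic_eq_convexHull_permMatrix] at hM
  refine convexHull_min ?_ convex_le hM
  rintro _ ⟨σ, rfl⟩
  rw [Set.mem_ofPred_eq, Matrix.permMatrix_mulVec]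
  exact hsa.sum_mul_comp_perm_le_sum_mul

end Majorization

section Overlap

variable {𝕜 E κ : Type*} [RCLike 𝕜] [NormedAddCommGroup E] [InnerProductSpace 𝕜 E] [Fintype κ]

lemma exists_orthonormalBasis_coe_eq [FiniteDimensional 𝕜 E] {v : κ → E} (hv : Orthonormal 𝕜 v)
    (hcard : Fintype.card κ = Module.finrank 𝕜 E) : ∃ b : OrthonormalBasis κ 𝕜 E, ⇑b = v :=
  ⟨.mk hv (hv.linearIndependent.span_eq_top_of_card_eq_finrank' hcard).ge,
    OrthonormalBasis.coe_mk _ _⟩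

/-- The matrix of transition probabilities `|⟨b k, e i⟩|²` between two orthonormal bases; the rows
are indexed by `e`, so that it carries the eigenvalues of an operator diagonal in `b` to the
diagonal of that operator in `e`. -/
noncomputable def overlapMatrix (e b : OrthonormalBasis κ 𝕜 E) : Matrix κ κ ℝ :=
  .of fun i k ↦ ‖⟪b k, e i⟫_𝕜‖ ^ 2

lemma overlapMatrix_mem_doublyStochastic [DecidableEq κ] (e b : OrthonormalBasis κ 𝕜 E) :
    overlapMatrix e b ∈ doublyStochastic ℝ κ := by
  refine mem_doublyStochastic_iff_sum.2 ⟨fun i k ↦ sq_nonneg _, fun i ↦ ?_, fun k ↦ ?_⟩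
  · simp only [overlapMatrix, Matrix.of_apply, b.sum_sq_norm_inner_right, e.norm_eq_one, one_pow]
  · simp only [overlapMatrix, Matrix.of_apply, e.sum_sq_norm_inner_left, b.norm_eq_one, one_pow]

lemma re_inner_apply_self_eq_sum {T : E →ₗ[𝕜] E} {b : OrthonormalBasis κ 𝕜 E} {a : κ → ℝ}
    (hT : ∀ k, T (b k) = (a k : 𝕜) • b k) (x : E) :
    RCLike.re ⟪x, T x⟫_𝕜 = ∑ k, ‖⟪b k, x⟫_𝕜‖ ^ 2 * a k := by
  have apply_eq : T x = ∑ k, ⟪b k, x⟫_𝕜 • (a k : 𝕜) • b k := by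
    conv_lhs => rw [← b.sum_repr' x]
    simp only [map_sum, map_smul, hT]
  rw [apply_eq, inner_sum, map_sum]
  refine Finset.sum_congr rfl fun k _ ↦ ?_
  have term_eq : ⟪x, ⟪b k, x⟫_𝕜 • (a k : 𝕜) • b k⟫_𝕜 = ((‖⟪b k, x⟫_𝕜‖ ^ 2 * a k : ℝ) : 𝕜) := by
    rw [inner_smul_right, inner_smul_right, mul_left_comm, ← inner_conj_symm x (b k),
      RCLike.mul_conj]
    push_cast
    ring
  rw [term_eq, RCLike.ofReal_re]

lemma re_inner_smul_self_of_norm_eq_one {x : E} (hx : ‖x‖ = 1) (r : ℝ) :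
    RCLike.re ⟪x, (r : 𝕜) • x⟫_𝕜 = r := by
  rw [inner_smul_right, inner_self_eq_one_of_norm_eq_one hx, mul_one, RCLike.ofReal_re]

lemma dotProduct_re_inner_apply_self_le {T : E →ₗ[𝕜] E} {b : OrthonormalBasis κ 𝕜 E}
    {a s : κ → ℝ} (hT : ∀ k, T (b k) = (a k : 𝕜) • b k) (hsa : Monovary s a)
    (e : OrthonormalBasis κ 𝕜 E) :
    s ⬝ᵥ (fun i ↦ RCLike.re ⟪e i, T (e i)⟫_𝕜) ≤ s ⬝ᵥ a := by
  classical
  have diagonal_eq : (fun i ↦ RCLike.re ⟪e i, T (e i)⟫_𝕜) = overlapMatrix e b *ᵥ a :=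
    funext fun i ↦ re_inner_apply_self_eq_sum hT (e i)
  rw [diagonal_eq]
  exact dotProduct_mulVec_le_of_mem_doublyStochastic (overlapMatrix_mem_doublyStochastic e b) hsa

lemma dotProduct_re_inner_sum_apply_self_le {ι : Type*} {t : Finset ι} {T : ι → E →ₗ[𝕜] E}
    {b : ι → OrthonormalBasis κ 𝕜 E} {a : ι → κ → ℝ} {s : κ → ℝ}
    (hT : ∀ l ∈ t, ∀ k, T l (b l k) = (a l k : 𝕜) • b l k) (hsa : ∀ l ∈ t, Monovary s (a l))
    (e : OrthonormalBasis κ 𝕜 E) :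
    s ⬝ᵥ (fun i ↦ RCLike.re ⟪e i, (∑ l ∈ t, T l) (e i)⟫_𝕜) ≤ s ⬝ᵥ ∑ l ∈ t, a l := by
  have diagonal_sum : (fun i ↦ RCLike.re ⟪e i, (∑ l ∈ t, T l) (e i)⟫_𝕜) =
      ∑ l ∈ t, fun i ↦ RCLike.re ⟪e i, T l (e i)⟫_𝕜 := by
    ext i
    simp only [LinearMap.sum_apply, inner_sum, map_sum, Finset.sum_apply]
  rw [diagonal_sum, dotProduct_sum, dotProduct_sum]
  exact Finset.sum_le_sum fun l hl ↦ dotProduct_re_inner_apply_self_le (hT l hl) (hsa l hl) e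

end Overlap

section pij

lemma sub_sq_div_add_le_sub_sq_div_add {R : Type*} [Field R] [LinearOrder R]
    [IsStrictOrderedRing R] {x x' y y' : R} (hy : 0 ≤ y) (hyy' : y ≤ y') (hyx' : y' ≤ x')
    (hxx' : x' ≤ x) : (x' - y') ^ 2 / (x' + y') ≤ (x - y) ^ 2 / (x + y) := by
  have hx : 0 ≤ x := by linarith
  rcases (show 0 ≤ x' + y' by linarith).eq_or_lt with h | h
  · rw [← h, div_zero]
    exact div_nonneg (sq_nonneg _) (add_nonneg hx hy)
  have ratio_le : (x' - y') / (x' + y') ≤ (x - y) / (x + y) := by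
    rw [div_le_div_iff₀ h (by linarith)]
    linarith [mul_le_mul hxx' hyy' hy hx]
  simp only [sq, mul_div_assoc]
  exact mul_le_mul (by linarith) ratio_le (div_nonneg (by linarith) h.le) (by linarith)

variable {d : ℕ} {p : Fin d → ℝ}

lemma pij_eq_div (p : Fin d → ℝ) (i j : Fin d) : pij p i j = (p i - p j) ^ 2 / (p i + p j) := by
  unfold pij
  split_ifs with h
  · simp [h]
  · rfl

lemma pij_nonneg (hp : ∀ i, 0 ≤ p i) (i j : Fin d) : 0 ≤ pij p i j := by
  rw [pij_eq_div]
  exact div_nonneg (sq_nonneg _) (add_nonneg (hp i) (hp j))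

lemma pij_comm (p : Fin d → ℝ) (i j : Fin d) : pij p i j = pij p j i := by
  rw [pij_eq_div, pij_eq_div, add_comm, sub_sq_comm]

lemma pij_le_pij (hp : Antitone p) {i i' j j' : Fin d} (hi : i ≤ i') (hij : i' ≤ j')
    (hj : j' ≤ j) (hpj : 0 ≤ p j) : pij p i' j' ≤ pij p i j := by
  rw [pij_eq_div, pij_eq_div]
  exact sub_sq_div_add_le_sub_sq_div_add hpj (hp hj) (hp hij) (hp hi)

lemma antitoneOn_pij_rev (hp_anti : Antitone p) (hp : ∀ i, 0 ≤ p i) :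
    AntitoneOn (fun i ↦ pij p i i.rev) {i | i ≤ i.rev} :=
  fun _ _ _ hj hij ↦ pij_le_pij hp_anti hij hj (Fin.rev_le_rev.2 hij) (hp _)

end pij

theorem pij_weighted_sum_inequality_multi_general {𝕜 E ι : Type*} [RCLike 𝕜]
    [NormedAddCommGroup E] [InnerProductSpace 𝕜 E] [Fintype ι] {d : ℕ} {q : Fin d → ℝ}
    (hq_nonneg : ∀ i, 0 ≤ q i) (hq_rev : ∀ i, q i.rev = q i)
    (hq_anti : AntitoneOn q {i | i ≤ i.rev})
    {T : ι → E →ₗ[𝕜] E} {b : ι → OrthonormalBasis (Fin d) 𝕜 E} {a : ι → Fin d → ℝ}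
    (hT : ∀ l k, T l (b l k) = (a l k : 𝕜) • b l k) (ha : ∀ l, Antitone (a l))
    {e : OrthonormalBasis (Fin d) 𝕜 E} {c : Fin d → ℝ}
    (hce : ∀ i, RCLike.re ⟪e i, (∑ l, T l) (e i)⟫_𝕜 = c i) (hc : Antitone c) :
    ∑ i, q i * (c i - c i.rev) ^ 2 ≤ ∑ i, q i * (∑ l, (a l i - a l i.rev)) ^ 2 := by
  have majorized (s : Fin d → ℝ) (hs : Antitone s) : s ⬝ᵥ c ≤ s ⬝ᵥ ∑ l, a l := by
    simpa only [hce] using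
      dotProduct_re_inner_sum_apply_self_le (t := .univ) (fun l _ ↦ hT l)
        (fun l _ ↦ hs.monovary (ha l)) e
  simpa only [Finset.sum_apply, ← Finset.sum_sub_distrib] using
    sum_mul_sub_rev_sq_le hq_nonneg hq_rev hq_anti hc majorized

/-- Finite-sum form of the upper bound `K_α` of Theorem 2: for `p_1 ≥ … ≥ p_d ≥ 0`,
Hermitian matrices `A_1, …, A_n` with decreasingly ordered eigenvalues `a l`
(each witnessed by an orthonormal eigenbasis), and `C = ∑ l, A l` with decreasingly
ordered eigenvalues `c`,
`∑ᵢ p_{i,d−i+1} (cᵢ − c_{d−i+1})² ≤ ∑ᵢ p_{i,d−i+1} (∑ₗ (aₗᵢ − aₗ_{d−i+1}))²`. -/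
theorem pij_weighted_sum_inequality_multi {d : ℕ} (hd : 1 ≤ d)
    (p : Fin d → ℝ) (hp : Antitone p) (hp0 : ∀ i, 0 ≤ p i)
    (n : ℕ) (hn : 1 ≤ n)
    (A : Fin n → Matrix (Fin d) (Fin d) ℂ) (hA : ∀ l, (A l).IsHermitian)
    (a : Fin n → Fin d → ℝ) (ha : ∀ l, Antitone (a l))
    (c : Fin d → ℝ) (hc : Antitone c)
    (u : Fin n → Fin d → EuclideanSpace ℂ (Fin d))
    (hu : ∀ l, Orthonormal ℂ (u l))
    (w : Fin d → EuclideanSpace ℂ (Fin d)) (hw : Orthonormal ℂ w)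
    (hAu : ∀ l k, Matrix.toEuclideanLin (A l) (u l k) = (a l k : ℂ) • u l k)
    (hCw : ∀ k, Matrix.toEuclideanLin (∑ l, A l) (w k) = (c k : ℂ) • w k) :
    ∑ i, pij p i i.rev * (c i - c i.rev) ^ 2
      ≤ ∑ i, pij p i i.rev * (∑ l, (a l i - a l i.rev)) ^ 2 := by
  choose b hb using fun l ↦ exists_orthonormalBasis_coe_eq (hu l) (by simp)
  obtain ⟨e, rfl⟩ := exists_orthonormalBasis_coe_eq hw (by simp)
  have apply_basis (l : Fin n) (k : Fin d) :
      Matrix.toEuclideanLin (A l) (b l k) = (a l k : ℂ) • b l k := by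
    rw [hb, hAu]
  have diagonal_eq (i : Fin d) :
      RCLike.re ⟪e i, (∑ l, Matrix.toEuclideanLin (A l)) (e i)⟫_ℂ = c i := by
    rw [← map_sum, hCw]
    exact re_inner_smul_self_of_norm_eq_one (e.norm_eq_one i) (c i)
  exact pij_weighted_sum_inequality_multi_general (fun i ↦ pij_nonneg hp0 i i.rev)
    (fun i ↦ by rw [Fin.rev_rev, pij_comm]) (antitoneOn_pij_rev hp hp0) apply_basis ha
    diagonal_eq hc
end
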